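/- arXiv:2507.16133 — 2 statements merged into one kernel-verified Lean document; each statement's English description precedes it below -/
import Mathlib

section
/- Let n ≥ 2 and let Λ be an n-dimensional isotropic subspace of ℂ^{2n+1}. Let S ⊆ [n] ∪ [n]̄ be an admissible subset and let J ⊆ [n] be such that (J ∪ J̄) ∩ S = ∅; write ℓ = |J|. Then there exists an admissible subset J₊ ⊆ J ∪ J̄ with |J₊| = ℓ such that rk_Λ(S ∪ J₊) = rk_Λ(S) + ℓ. -/
/-!
Through the bilinear form, the basis vector at `p̄` represents the `p`-th coordinate. Hence
`rk_Λ(S)` is the rank of the pairing of `W × Λ`, where `W` is the span of the vectors representing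
the coordinates in `S`, and `W` is isotropic because `S` is admissible. Adding one index at a time,
it is enough to see that for `j`, `j̄ ∉ S` one of the two vectors `x`, `y` representing the
coordinates `j`, `j̄` lies outside `W + Λ^⊥`, so that adding it raises the rank.

Both `x` and `y` are isotropic and orthogonal to `W`. If such a vector is `u + a` with `u ∈ W` and
`a ∈ Λ^⊥`, then `a` is isotropic too, hence in `Λ`, which for dimension reasons is a maximal
isotropic subspace. So if `x` and `y` both were in `W + Λ^⊥`, they would both be in
`(W + Λ) ∩ W^⊥ = W + (Λ ∩ W^⊥)`, which is isotropic, while `x · y = 1`.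
-/

open scoped BigOperators

/-- Index set for the coordinates of `ℂ^{2n+1}`: `none` is the coordinate `0`,
`some (q, false)` is the coordinate `q+1 ∈ [n]`, and `some (q, true)` is the barred
coordinate `(q+1)̄ ∈ [n]̄`. -/
abbrev Idx (n : ℕ) := Option (Fin n × Bool)

/-- The nondegenerate symmetric bilinear form
`y·z = 2 y₀ z₀ + Σ_q (y_q z_{q̄} + y_{q̄} z_q)` on `ℂ^{2n+1}`. -/
noncomputable def bform (n : ℕ) (y z : Idx n → ℂ) : ℂ :=
  2 * y none * z none +
    ∑ q : Fin n, (y (some (q, false)) * z (some (q, true)) +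
      y (some (q, true)) * z (some (q, false)))

/-- A subspace is isotropic if the bilinear form vanishes identically on it. -/
def IsIsotropic (n : ℕ) (Λ : Submodule ℂ (Idx n → ℂ)) : Prop :=
  ∀ y ∈ Λ, ∀ z ∈ Λ, bform n y z = 0

/-- `H_S`: the coordinate subspace of vectors whose coordinates indexed by `S` vanish. -/
noncomputable def coordSub (n : ℕ) (S : Set (Idx n)) : Submodule ℂ (Idx n → ℂ) where
  carrier := {v | ∀ i ∈ S, v i = 0}
  add_mem' := by
    intro a b ha hb i hi
    simp only [Pi.add_apply, ha i hi, hb i hi, add_zero]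
  zero_mem' := by intro i hi; rfl
  smul_mem' := by
    intro c a ha i hi
    simp only [Pi.smul_apply, ha i hi, smul_zero]

/-- `rk_Λ(S) = n − dim(Λ ∩ H_S)`. -/
noncomputable def rk (n : ℕ) (Λ : Submodule ℂ (Idx n → ℂ)) (S : Set (Idx n)) : ℕ :=
  n - Module.finrank ℂ ↥(Λ ⊓ coordSub n S)

/-- The set of coordinates in `[n] ∪ [n]̄` corresponding to a finite set of pairs. -/
def finIdx (n : ℕ) (S : Finset (Fin n × Bool)) : Set (Idx n) :=
  (fun p => (some p : Idx n)) '' ↑S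

/-- A subset `S ⊆ [n] ∪ [n]̄` is admissible if it contains no pair `{q, q̄}`. -/
def Admissible (n : ℕ) (S : Finset (Fin n × Bool)) : Prop :=
  ∀ q : Fin n, ¬((q, false) ∈ S ∧ (q, true) ∈ S)

/-- `rk_Λ(S)` for `S ⊆ [n] ∪ [n]̄`. -/
noncomputable def rkF (n : ℕ) (Λ : Submodule ℂ (Idx n → ℂ)) (S : Finset (Fin n × Bool)) : ℕ :=
  rk n Λ (finIdx n S)

/-- `g_Λ(S) = rk_Λ(S) − |S ∩ [n]̄|`. -/
noncomputable def gF (n : ℕ) (Λ : Submodule ℂ (Idx n → ℂ)) (S : Finset (Fin n × Bool)) : ℤ :=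
  (rkF n Λ S : ℤ) - ((S.filter fun p => p.2 = true).card : ℤ)

/-- The delta-matroid `𝒟(Λ)`: maximal admissible subsets of full rank. -/
def deltaMatroid (n : ℕ) (Λ : Submodule ℂ (Idx n → ℂ)) : Set (Finset (Fin n × Bool)) :=
  {S | Admissible n S ∧ S.card = n ∧ rkF n Λ S = n}

/-- `x(S) = Σ_{q ∈ S ∩ [n]} x_q − Σ_{q̄ ∈ S ∩ [n]̄} x_q`. -/
def xval (n : ℕ) (x : Fin n → ℝ) (S : Finset (Fin n × Bool)) : ℝ :=
  ∑ p ∈ S.filter (fun p => p.2 = false), x p.1 -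
    ∑ p ∈ S.filter (fun p => p.2 = true), x p.1

/-- The polytope `𝒫(Λ)` cut out by the inequalities `x(S) ≤ g_Λ(S)` over admissible `S`. -/
def polytopeP (n : ℕ) (Λ : Submodule ℂ (Idx n → ℂ)) : Set (Fin n → ℝ) :=
  {x | ∀ S : Finset (Fin n × Bool), Admissible n S → xval n x S ≤ (gF n Λ S : ℝ)}

/-- `χ(S')`: the 0–1 vector whose `q`-th coordinate is `1` exactly when `q ∈ S' ∩ [n]`. -/
def chi (n : ℕ) (S : Finset (Fin n × Bool)) : Fin n → ℝ :=
  fun q => if (q, false) ∈ S then 1 else 0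

/-- `S₁ ⊔ S₂ = {a ∈ S₁ ∪ S₂ : ā ∉ S₁ ∪ S₂}`. -/
def sqcup (n : ℕ) (S₁ S₂ : Finset (Fin n × Bool)) : Finset (Fin n × Bool) :=
  (S₁ ∪ S₂).filter (fun p => (p.1, !p.2) ∉ S₁ ∪ S₂)

open Module Submodule
open LinearMap (BilinForm)

section Isotropic

variable {R M : Type*} [CommRing R] [AddCommGroup M] [Module R M] {B : BilinForm R M}
  {U W Λ : Submodule R M} {x y : M}

lemma mem_orthogonal_span_iff {s : Set M} :
    x ∈ B.orthogonal (span R s) ↔ ∀ y ∈ s, B y x = 0 :=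
  span_le (p := LinearMap.ker (B.flip x))

lemma sup_le_orthogonal_sup (hB : B.IsRefl) (hU : U ≤ B.orthogonal U) (hW : W ≤ B.orthogonal W)
    (hWU : W ≤ B.orthogonal U) : U ⊔ W ≤ B.orthogonal (U ⊔ W) := by
  intro _ hz _ hz'
  obtain ⟨u, hu, w, hw, rfl⟩ := mem_sup.1 hz
  obtain ⟨u', hu', w', hw', rfl⟩ := mem_sup.1 hz'
  simp [hU hu u' hu', hW hw w' hw', hWU hw u' hu', hB _ _ (hWU hw' u hu)]

lemma span_singleton_le_orthogonal (hx : B x x = 0) : R ∙ x ≤ B.orthogonal (R ∙ x) := by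
  intro _ hy _ hz
  obtain ⟨c, rfl⟩ := mem_span_singleton.1 hy
  obtain ⟨d, rfl⟩ := mem_span_singleton.1 hz
  simp [hx]

lemma mem_of_maximal_isotropic (hB : B.IsRefl) (hΛ : Maximal (fun W ↦ W ≤ B.orthogonal W) Λ)
    (hx : x ∈ B.orthogonal Λ) (hxx : B x x = 0) : x ∈ Λ := by
  have hsup : Λ ⊔ R ∙ x ≤ B.orthogonal (Λ ⊔ R ∙ x) :=
    sup_le_orthogonal_sup hB hΛ.prop (span_singleton_le_orthogonal hxx)
      (by rwa [span_singleton_le_iff_mem])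
  exact hΛ.le_of_ge hsup le_sup_left (mem_sup_right (mem_span_singleton_self x))

lemma mem_sup_of_mem_sup_orthogonal (hB : B.IsRefl)
    (hΛ : Maximal (fun W ↦ W ≤ B.orthogonal W) Λ) (hW : W ≤ B.orthogonal W)
    (hx : x ∈ B.orthogonal W) (hxx : B x x = 0) (hxΛ : x ∈ W ⊔ B.orthogonal Λ) : x ∈ W ⊔ Λ := by
  obtain ⟨u, hu, a, ha, rfl⟩ := mem_sup.1 hxΛ
  have hua : B u a = 0 := by simpa [hW hu u hu] using hx u hu
  have haa : B a a = 0 := by simpa [hW hu u hu, hua, hB u a hua] using hxx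
  exact add_mem_sup hu (mem_of_maximal_isotropic hB hΛ ha haa)

lemma sup_inf_orthogonal_le_orthogonal (hB : B.IsRefl) (hΛ : Λ ≤ B.orthogonal Λ)
    (hW : W ≤ B.orthogonal W) :
    (W ⊔ Λ) ⊓ B.orthogonal W ≤ B.orthogonal ((W ⊔ Λ) ⊓ B.orthogonal W) := by
  have hΛW : Λ ⊓ B.orthogonal W ≤ B.orthogonal (Λ ⊓ B.orthogonal W) :=
    inf_le_left.trans (hΛ.trans (BilinForm.orthogonal_le inf_le_left))
  rw [sup_inf_assoc_of_le Λ hW]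
  exact sup_le_orthogonal_sup hB hW hΛW inf_le_right

lemma notMem_or_notMem_sup_orthogonal (hB : B.IsRefl) (hΛ : Maximal (fun W ↦ W ≤ B.orthogonal W) Λ)
    (hW : W ≤ B.orthogonal W) (hx : x ∈ B.orthogonal W) (hy : y ∈ B.orthogonal W)
    (hxx : B x x = 0) (hyy : B y y = 0) (hxy : B x y ≠ 0) :
    x ∉ W ⊔ B.orthogonal Λ ∨ y ∉ W ⊔ B.orthogonal Λ := by
  by_contra! ⟨hxΛ, hyΛ⟩
  exact hxy <| sup_inf_orthogonal_le_orthogonal hB hΛ.prop hW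
    ⟨mem_sup_of_mem_sup_orthogonal hB hΛ hW hy hyy hyΛ, hy⟩ x
    ⟨mem_sup_of_mem_sup_orthogonal hB hΛ hW hx hxx hxΛ, hx⟩

end Isotropic

section PairingRank

variable {K V : Type*} [Field K] [AddCommGroup V] [Module K V]

/-- The rank of the pairing `W × Λ → K` given by `B`: the dimension of the space of functionals
`B w` on `Λ`, `w ∈ W` (`0` if that space is infinite-dimensional). -/
noncomputable def pairingRank (B : BilinForm K V) (Λ W : Submodule K V) : ℕ :=
  finrank K (W.map (Λ.dualRestrict ∘ₗ B))

variable {B : BilinForm K V} {Λ : Submodule K V}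

lemma pairingRank_add_finrank_inf_orthogonal [FiniteDimensional K Λ] (W : Submodule K V) :
    pairingRank B Λ W + finrank K ↥(Λ ⊓ B.orthogonal W) = finrank K Λ := by
  have hann : (W.map (Λ.dualRestrict ∘ₗ B)).dualCoannihilator =
      (B.orthogonal W).comap Λ.subtype := by
    ext v
    simp [mem_dualCoannihilator]
  rw [← Subspace.finrank_add_finrank_dualCoannihilator_eq (W.map (Λ.dualRestrict ∘ₗ B)), hann,
    ← map_comap_subtype, finrank_map_subtype_eq, pairingRank]

lemma ker_dualRestrict_comp (hB : B.IsRefl) :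
    LinearMap.ker (Λ.dualRestrict ∘ₗ B) = B.orthogonal Λ := by
  ext x
  simp [LinearMap.ext_iff, hB.eq_iff]

lemma pairingRank_sup_span_singleton [FiniteDimensional K Λ] (hB : B.IsRefl)
    {W : Submodule K V} {x : V} (hx : x ∉ W ⊔ B.orthogonal Λ) :
    pairingRank B Λ (W ⊔ K ∙ x) = pairingRank B Λ W + 1 := by
  rw [← ker_dualRestrict_comp hB, ← comap_map_eq, mem_comap] at hx
  rw [pairingRank, Submodule.map_sup, LinearMap.map_span, Set.image_singleton]
  exact finrank_sup_span_singleton hx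

end PairingRank

section FiniteDimensional

variable {K V : Type*} [Field K] [AddCommGroup V] [Module K V] [FiniteDimensional K V]
  {B : BilinForm K V} {Λ W : Submodule K V}

lemma two_mul_finrank_le_of_le_orthogonal (hB : B.Nondegenerate) (hW : W ≤ B.orthogonal W) :
    2 * finrank K W ≤ finrank K V := by
  have hle : finrank K W ≤ finrank K V - finrank K W :=
    (finrank_mono hW).trans_eq (BilinForm.finrank_orthogonal hB W)
  have := W.finrank_le
  lia

lemma maximal_isotropic_of_finrank_le (hB : B.Nondegenerate) (hΛ : Λ ≤ B.orthogonal Λ)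
    (hdim : finrank K V ≤ 2 * finrank K Λ + 1) : Maximal (fun W ↦ W ≤ B.orthogonal W) Λ := by
  refine ⟨hΛ, fun W hW hΛW ↦ (eq_of_le_of_finrank_le hΛW ?_).ge⟩
  have := two_mul_finrank_le_of_le_orthogonal hB hW
  lia

end FiniteDimensional

section Admissible

/-- The involution `q ↔ q̄` of `ι ∪ ῑ`, with `(q, false)` encoding `q` and `(q, true)` encoding
`q̄`. -/
def bar {ι : Type*} (p : ι × Bool) : ι × Bool := (p.1, !p.2)

variable {n : ℕ} {S : Finset (Fin n × Bool)}

lemma Admissible.bar_notMem (hS : Admissible n S) {p : Fin n × Bool} (hp : p ∈ S) : bar p ∉ S := by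
  rcases p with ⟨q, _ | _⟩
  · exact fun h ↦ hS q ⟨hp, h⟩
  · exact fun h ↦ hS q ⟨h, hp⟩

lemma Admissible.insert (hS : Admissible n S) {p : Fin n × Bool} (hp : bar p ∉ S) :
    Admissible n (insert p S) := by
  rcases p with ⟨j, _ | _⟩ <;> grind [Admissible, bar]

end Admissible

section Hyperbolic

/-- A family of vectors `e_p` indexed by `ι ∪ ῑ` that consists of mutually orthogonal hyperbolic
pairs `e_q`, `e_q̄`. -/
def IsHyperbolic {R M ι : Type*} [CommRing R] [AddCommGroup M] [Module R M] [DecidableEq ι]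
    (B : BilinForm R M) (e : ι × Bool → M) : Prop :=
  ∀ p q, B (e p) (e q) = if p = bar q then 1 else 0

namespace IsHyperbolic

section CommRing

variable {R M ι : Type*} [CommRing R] [AddCommGroup M] [Module R M] [DecidableEq ι]
  {B : BilinForm R M} {e : ι × Bool → M}

lemma apply_self (he : IsHyperbolic B e) (p : ι × Bool) : B (e p) (e p) = 0 := by
  rw [he, if_neg]
  exact fun h ↦ by simpa [bar] using congrArg Prod.snd h

lemma mem_orthogonal_span (he : IsHyperbolic B e) {S : Set (ι × Bool)} {p : ι × Bool}
    (hp : bar p ∉ S) : e p ∈ B.orthogonal (span R (e '' S)) := by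
  rw [mem_orthogonal_span_iff, Set.forall_mem_image]
  intro s hs
  rw [he, if_neg]
  rintro rfl
  exact hp hs

lemma span_le_orthogonal {n : ℕ} {e : Fin n × Bool → M} (he : IsHyperbolic B e)
    {S : Finset (Fin n × Bool)} (hS : Admissible n S) :
    span R (e '' S) ≤ B.orthogonal (span R (e '' S)) := by
  rw [span_le, Set.image_subset_iff]
  exact fun p hp ↦ he.mem_orthogonal_span (hS.bar_notMem hp)

end CommRing

variable {K V : Type*} [Field K] [AddCommGroup V] [Module K V] {B : BilinForm K V}
  {Λ : Submodule K V} [FiniteDimensional K Λ] {n : ℕ} {e : Fin n × Bool → V}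
  {S : Finset (Fin n × Bool)}

lemma exists_pairingRank_insert (he : IsHyperbolic B e) (hB : B.IsRefl)
    (hΛ : Maximal (fun W ↦ W ≤ B.orthogonal W) Λ) (hS : Admissible n S) {j : Fin n}
    (hj : ∀ b, (j, b) ∉ S) :
    ∃ b, pairingRank B Λ (span K (e '' (insert (j, b) S : Finset _))) =
      pairingRank B Λ (span K (e '' S)) + 1 := by
  have horth (b : Bool) : e (j, b) ∈ B.orthogonal (span K (e '' S)) :=
    he.mem_orthogonal_span (hj !b)
  have hpair : B (e (j, false)) (e (j, true)) ≠ 0 := by simp [he _ _, bar]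
  obtain ⟨b, hb⟩ : ∃ b, e (j, b) ∉ span K (e '' S) ⊔ B.orthogonal Λ := by
    rw [Bool.exists_bool]
    exact notMem_or_notMem_sup_orthogonal hB hΛ (he.span_le_orthogonal hS) (horth _) (horth _)
      (he.apply_self _) (he.apply_self _) hpair
  refine ⟨b, ?_⟩
  rw [Finset.coe_insert, Set.image_insert_eq, span_insert, sup_comm,
    pairingRank_sup_span_singleton hB hb]

end IsHyperbolic

theorem stmt2_general {K V : Type*} [Field K] [AddCommGroup V] [Module K V] {B : BilinForm K V}
    (hB : B.IsRefl) {Λ : Submodule K V} [FiniteDimensional K Λ]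
    (hΛ : Maximal (fun W ↦ W ≤ B.orthogonal W) Λ) {n : ℕ} {e : Fin n × Bool → V}
    (he : IsHyperbolic B e) {S : Finset (Fin n × Bool)} (hS : Admissible n S) {J : Finset (Fin n)}
    (hJ : ∀ j ∈ J, ∀ b, (j, b) ∉ S) :
    ∃ Jp : Finset (Fin n × Bool), Admissible n Jp ∧ (∀ p ∈ Jp, p.1 ∈ J) ∧ Jp.card = J.card ∧
      pairingRank B Λ (span K (e '' (S ∪ Jp : Finset _))) =
        pairingRank B Λ (span K (e '' S)) + J.card := by
  induction J using Finset.induction_on generalizing S with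
  | empty => exact ⟨∅, by simp [Admissible]⟩
  | insert j J hjJ ih =>
    have hj := hJ j (Finset.mem_insert_self j J)
    obtain ⟨b, hb⟩ := he.exists_pairingRank_insert hB hΛ hS hj
    have hJ' : ∀ i ∈ J, ∀ c, (i, c) ∉ insert (j, b) S := fun i hi c ↦ by
      have := hJ i (Finset.mem_insert_of_mem hi) c
      grind
    obtain ⟨Jp, hJp, hsub, hcard, hrank⟩ := ih (hS.insert (p := (j, b)) (hj !b)) hJ'
    have hjJp (c : Bool) : (j, c) ∉ Jp := fun hc ↦ hjJ (hsub _ hc)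
    refine ⟨insert (j, b) Jp, hJp.insert (p := (j, b)) (hjJp !b), by grind, ?_, ?_⟩
    · rw [Finset.card_insert_of_notMem (hjJp b), Finset.card_insert_of_notMem hjJ, hcard]
    · rw [Finset.union_insert, ← Finset.insert_union, hrank, hb, Finset.card_insert_of_notMem hjJ,
        add_assoc, add_comm 1]

end Hyperbolic

section Coordinates

variable {n : ℕ}

/-- `bform` as a bundled bilinear form, so that it has Mathlib's orthogonal complements. -/
noncomputable def bformBilin (n : ℕ) : BilinForm ℂ (Idx n → ℂ) :=
  let x (i : Idx n) : Dual ℂ (Idx n → ℂ) := LinearMap.proj i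
  2 • BilinForm.linMulLin (x none) (x none) +
    ∑ q : Fin n, (BilinForm.linMulLin (x (some (q, false))) (x (some (q, true))) +
      BilinForm.linMulLin (x (some (q, true))) (x (some (q, false))))

lemma bformBilin_apply (y z : Idx n → ℂ) : bformBilin n y z = bform n y z := by
  simp [bformBilin, bform, LinearMap.sum_apply, mul_assoc]

lemma bformBilin_isRefl : (bformBilin n).IsRefl := by
  refine (BilinForm.isSymm_def.2 fun y z ↦ ?_).isRefl
  simp only [bformBilin_apply, bform, add_comm, mul_comm, mul_left_comm]

/-- The standard basis vector at `p̄`; through `bform` it represents the `p`-th coordinate. -/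
noncomputable def coordVec (p : Fin n × Bool) : Idx n → ℂ := Pi.single (some (bar p)) 1

lemma bformBilin_coordVec (p : Fin n × Bool) (z : Idx n → ℂ) :
    bformBilin n (coordVec p) z = z (some p) := by
  rcases p with ⟨q, _ | _⟩ <;>
    simp [bformBilin_apply, bform, coordVec, bar, Pi.single_apply]

lemma bformBilin_single_none (z : Idx n → ℂ) :
    bformBilin n (Pi.single none 1) z = 2 * z none := by
  simp [bformBilin_apply, bform]

lemma isHyperbolic_coordVec : IsHyperbolic (bformBilin n) coordVec := by
  intro p q
  rw [bformBilin_coordVec]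
  simp [coordVec, Pi.single_apply]

lemma bformBilin_nondegenerate : (bformBilin n).Nondegenerate := by
  refine bformBilin_isRefl.nondegenerate_iff_separatingRight.2 ?_
  intro z hz
  ext (_ | p)
  · simpa [bformBilin_single_none] using hz (Pi.single none 1)
  · simpa [bformBilin_coordVec] using hz (coordVec p)

lemma coordSub_finIdx_eq_orthogonal (S : Finset (Fin n × Bool)) :
    coordSub n (finIdx n S) = (bformBilin n).orthogonal (span ℂ (coordVec '' S)) := by
  ext v
  rw [mem_orthogonal_span_iff, Set.forall_mem_image]
  simp only [bformBilin_coordVec]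
  exact Set.forall_mem_image

lemma rkF_eq_pairingRank {Λ : Submodule ℂ (Idx n → ℂ)} (hΛ : finrank ℂ Λ = n)
    (S : Finset (Fin n × Bool)) :
    rkF n Λ S = pairingRank (bformBilin n) Λ (span ℂ (coordVec '' S)) := by
  have h := pairingRank_add_finrank_inf_orthogonal (B := bformBilin n) (Λ := Λ)
    (span ℂ (coordVec '' S))
  rw [rkF, rk, coordSub_finIdx_eq_orthogonal]
  lia

lemma IsIsotropic.maximal {Λ : Submodule ℂ (Idx n → ℂ)} (hiso : IsIsotropic n Λ)
    (hΛ : finrank ℂ Λ = n) : Maximal (fun W ↦ W ≤ (bformBilin n).orthogonal W) Λ := by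
  refine maximal_isotropic_of_finrank_le bformBilin_nondegenerate
    (fun z hz y hy ↦ (bformBilin_apply y z).trans (hiso y hy z hz)) (le_of_eq ?_)
  simp [hΛ, mul_comm]

end Coordinates

theorem stmt2 (n : ℕ) (hn : 2 ≤ n)
    (Λ : Submodule ℂ (Idx n → ℂ)) (hiso : IsIsotropic n Λ)
    (hΛ : Module.finrank ℂ ↥Λ = n)
    (S : Finset (Fin n × Bool)) (hS : Admissible n S)
    (J : Finset (Fin n)) (hJ : ∀ j ∈ J, ∀ b : Bool, (j, b) ∉ S) :
    ∃ Jp : Finset (Fin n × Bool), Admissible n Jp ∧ (∀ p ∈ Jp, p.1 ∈ J) ∧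
      Jp.card = J.card ∧ rkF n Λ (S ∪ Jp) = rkF n Λ S + J.card := by
  simpa only [rkF_eq_pairingRank hΛ] using
    stmt2_general bformBilin_isRefl (hiso.maximal hΛ) isHyperbolic_coordVec hS hJ
end

section
/- Let n ≥ 2 and let Λ be an n-dimensional isotropic subspace of ℂ^{2n+1}. Then the convex hull 𝒳(Λ) in ℝⁿ of the vectors χ(S') for S' ∈ 𝒟(Λ) is equal to the polytope 𝒫(Λ). -/
/-!
Write `y_q = x_q` and `y_{q̄} = 1 - x_q`. Then `x(S) ≤ g_Λ(S)` says `∑_{p ∈ S} y_p ≤ rk_Λ(S)`, and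
`rk_Λ(S)` is the dimension of the span of the coordinate functionals `p ∈ S` on `Λ`.

If `B ∈ 𝒟(Λ)`, the coordinates in `B` are independent on `Λ`, so `|S ∩ B| ≤ rk_Λ(S)`, which is the
inequality for `χ(B)`.

Conversely, let `x ∈ 𝒫(Λ)`. It suffices to bound each functional `w` at `x` by its value at some
`χ(B)`. Let `ε` record the signs of `w`, so that, up to a constant, `w` has the nonnegative
coefficient `|w i|` at the coordinate `(i, ε i)`. The greedy algorithm on these `n` coordinates
gives a basis `I` of their span whose weight is at least `∑ |w i| y_{(i, ε i)}`. Completing `I` to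
`B` by the coordinates `(i, !ε i)`, `i ∉ I`, gives an element of `𝒟(Λ)`: a vector `v ∈ Λ` vanishing
on `B` vanishes at all `(i, ε i)`; then `v · v = 0` gives `v₀ = 0`, and `v · Λ = 0` is a linear
relation among the independent coordinates in `I`, whose coefficients are the other entries of `v`.
-/

open scoped BigOperators

section LinearMatroid

variable {K V ι : Type*} [DivisionRing K] [AddCommGroup V] [Module K V] {f : ι → V}

lemma linearIndepOn_iff_finrank_image_eq_card {B : Finset ι} :
    LinearIndepOn K f (B : Set ι) ↔ Set.finrank K (f '' (B : Set ι)) = B.card := by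
  rw [LinearIndepOn, linearIndependent_iff_card_eq_finrank_span, ← Set.image_eq_range, eq_comm]
  simp

lemma card_inter_le_finrank_image [DecidableEq ι] {B : Finset ι}
    (hB : LinearIndepOn K f (B : Set ι)) (S : Finset ι) :
    (S ∩ B).card ≤ Set.finrank K (f '' (S : Set ι)) := by
  have hSB : LinearIndepOn K f ((S ∩ B : Finset ι) : Set ι) :=
    hB.mono (Finset.coe_subset.mpr Finset.inter_subset_right)
  have : FiniteDimensional K (Submodule.span K (f '' (S : Set ι))) :=
    FiniteDimensional.span_of_finite K (S.finite_toSet.image f)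
  rw [← linearIndepOn_iff_finrank_image_eq_card.mp hSB]
  exact Submodule.finrank_mono
    (Submodule.span_mono (Set.image_mono (Finset.coe_subset.mpr Finset.inter_subset_left)))

lemma exists_basis_insert_of_basis [DecidableEq ι] {I T : Finset ι}
    (hI : LinearIndepOn K f (I : Set ι))
    (hspan : Submodule.span K (f '' (I : Set ι)) = Submodule.span K (f '' (T : Set ι))) (j : ι) :
    ∃ J : Finset ι, I ⊆ J ∧ J ⊆ insert j I ∧ LinearIndepOn K f (J : Set ι) ∧
      Submodule.span K (f '' (J : Set ι)) =
        Submodule.span K (f '' ((insert j T : Finset ι) : Set ι)) := by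
  have hsub : (I : Set ι) ⊆ (insert j I : Finset ι) := by simp
  lift hI.extend hsub to Finset ι using
    (Finset.finite_toSet _).subset (hI.extend_subset hsub) with J hJ
  refine ⟨J, ?_, ?_, ?_, ?_⟩
  · exact_mod_cast hJ ▸ hI.subset_extend hsub
  · exact_mod_cast hJ ▸ hI.extend_subset hsub
  · exact hJ ▸ hI.linearIndepOn_extend hsub
  · rw [hJ, hI.span_image_extend_eq_span_image hsub]
    simp only [Finset.coe_insert, Set.image_insert_eq, Submodule.span_insert, hspan]

/-- The greedy algorithm. If `j` has the smallest weight, then subtracting `a j` from all weights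
lowers the left side by `a j * ∑ i ∈ T, y i` and the right side by `a j` times the rank of `T`, and
leaves `j` with weight zero. -/
theorem exists_basis_sum_mul_le_sum {R : Type*} [CommRing R] [LinearOrder R] [IsStrictOrderedRing R]
    {a y : ι → R} (T : Finset ι) (ha : ∀ i ∈ T, 0 ≤ a i)
    (hy : ∀ S ⊆ T, ∑ i ∈ S, y i ≤ (Set.finrank K (f '' (S : Set ι)) : R)) :
    ∃ I ⊆ T, LinearIndepOn K f (I : Set ι) ∧
      Submodule.span K (f '' (I : Set ι)) = Submodule.span K (f '' (T : Set ι)) ∧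
      ∑ i ∈ T, a i * y i ≤ ∑ i ∈ I, a i := by
  classical
  induction T using Finset.strongInduction generalizing a with
  | H T ih =>
    rcases T.eq_empty_or_nonempty with rfl | hT
    · exact ⟨∅, by simp⟩
    obtain ⟨j, hj, hmin⟩ := T.exists_min_image a hT
    obtain ⟨I, hIT, hI, hIspan, hle⟩ := ih (T.erase j) (Finset.erase_ssubset hj)
      (a := fun i => a i - a j) (fun i hi => sub_nonneg.mpr (hmin i (Finset.mem_of_mem_erase hi)))
      (fun S hS => hy S (hS.trans (T.erase_subset j)))
    obtain ⟨J, hIJ, hJI, hJ, hJspan⟩ := exists_basis_insert_of_basis hI hIspan j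
    rw [Finset.insert_erase hj] at hJspan
    have hrank : ∑ i ∈ T, y i ≤ (J.card : R) := by
      rw [← linearIndepOn_iff_finrank_image_eq_card.mp hJ, Set.finrank, hJspan]
      exact hy T subset_rfl
    have hweight : ∑ i ∈ I, (a i - a j) = ∑ i ∈ J, (a i - a j) :=
      Finset.sum_subset hIJ fun i hiJ hiI => by
        rw [(Finset.mem_insert.mp (hJI hiJ)).resolve_right hiI, sub_self]
    refine ⟨J, ?_, hJ, hJspan, ?_⟩
    · exact hJI.trans (Finset.insert_subset hj (hIT.trans (T.erase_subset j)))
    calc ∑ i ∈ T, a i * y i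
        = ∑ i ∈ T.erase j, (a i - a j) * y i + a j * ∑ i ∈ T, y i := by
          rw [Finset.sum_erase _ (by simp), Finset.mul_sum, ← Finset.sum_add_distrib]
          exact Finset.sum_congr rfl fun i _ => by ring
      _ ≤ ∑ i ∈ J, (a i - a j) + a j * J.card := by
          rw [← hweight]
          exact add_le_add hle (mul_le_mul_of_nonneg_left hrank (ha j hj))
      _ = ∑ i ∈ J, a i := by
          rw [Finset.sum_sub_distrib, Finset.sum_const, nsmul_eq_mul]
          ring

end LinearMatroid

lemma mem_convexHull_of_forall_exists_dotProduct_le {ι : Type*} [Fintype ι] {s : Set (ι → ℝ)}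
    (hs : s.Finite) {x : ι → ℝ} (h : ∀ w : ι → ℝ, ∃ z ∈ s, w ⬝ᵥ x ≤ w ⬝ᵥ z) :
    x ∈ convexHull ℝ s := by
  by_contra hx
  obtain ⟨φ, u, hφ, hu⟩ :=
    geometric_hahn_banach_closed_point (convex_convexHull ℝ s) (hs.isClosed_convexHull ℝ) hx
  classical
  obtain ⟨w, hw⟩ := (dotProductEquiv ℝ ι).surjective φ.toLinearMap
  have hφw : ∀ z, φ z = w ⬝ᵥ z := fun z => (LinearMap.congr_fun hw z).symm
  obtain ⟨z, hz, hle⟩ := h w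
  have hzu : w ⬝ᵥ z < u := hφw z ▸ hφ z (subset_convexHull ℝ s hz)
  exact absurd (hzu.trans (hφw x ▸ hu)) hle.not_gt

section BarredCoordinates

variable {ι : Type*}

/-- The extension of a point `x` to the barred indices by `x_{q̄} = 1 - x_q`. In these coordinates
the inequalities defining `𝒫(Λ)` become `∑_{p ∈ S} x_p ≤ rk_Λ(S)`. -/
def barExtend (x : ι → ℝ) (p : ι × Bool) : ℝ :=
  if p.2 then 1 - x p.1 else x p.1

lemma dotProduct_eq_sum_abs_mul_barExtend [Fintype ι] (w x : ι → ℝ) :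
    w ⬝ᵥ x = ∑ i, |w i| * barExtend x (i, decide (w i < 0)) - ∑ i, (w i)⁻ := by
  rw [dotProduct, ← Finset.sum_sub_distrib]
  refine Finset.sum_congr rfl fun i _ => ?_
  rcases lt_or_ge (w i) 0 with hi | hi
  · simp only [barExtend, hi, decide_true, if_true, abs_of_neg hi, negPart_of_nonpos hi.le]
    ring
  · simp [barExtend, hi.not_gt, abs_of_nonneg hi, negPart_of_nonneg hi]

/-- The maximal admissible set `{(i, σ i)}`, where `σ` chooses one of `i`, `ī` for each `i`. -/
def transversal [Fintype ι] [DecidableEq ι] (σ : ι → Bool) : Finset (ι × Bool) :=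
  Finset.univ.filter fun p => p.2 = σ p.1

variable [Fintype ι] [DecidableEq ι] {σ : ι → Bool}

@[simp]
lemma mem_transversal {p : ι × Bool} : p ∈ transversal σ ↔ p.2 = σ p.1 := by
  simp [transversal]

lemma transversal_eq_image (σ : ι → Bool) :
    transversal σ = Finset.univ.image fun i => (i, σ i) := by
  ext ⟨i, b⟩
  simp [eq_comm]

lemma card_transversal (σ : ι → Bool) : (transversal σ).card = Fintype.card ι := by
  rw [transversal_eq_image, Finset.card_image_of_injective _ fun i j h => congrArg Prod.fst h,
    Finset.card_univ]

end BarredCoordinates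

section CoordinateFunctionals

variable {K ι : Type*} [CommSemiring K]

/-- The `i`-th coordinate functional on a submodule `Λ` of `K^ι`. -/
def coordFun (Λ : Submodule K (ι → K)) (i : ι) : Module.Dual K Λ :=
  LinearMap.proj i ∘ₗ Λ.subtype

@[simp]
lemma coordFun_apply (Λ : Submodule K (ι → K)) (i : ι) (v : Λ) : coordFun Λ i v = v.1 i :=
  rfl

lemma mem_dualCoannihilator_span_coordFun {Λ : Submodule K (ι → K)} {S : Set ι} {v : Λ} :
    v ∈ (Submodule.span K (coordFun Λ '' S)).dualCoannihilator ↔ ∀ i ∈ S, v.1 i = 0 := by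
  rw [← SetLike.mem_coe, Submodule.coe_dualCoannihilator_span]
  simp

end CoordinateFunctionals

section IsotropicSubspaces

variable {n : ℕ} {Λ : Submodule ℂ (Idx n → ℂ)}

lemma admissible_iff_exists_subset_transversal {S : Finset (Fin n × Bool)} :
    Admissible n S ↔ ∃ σ, S ⊆ transversal σ := by
  constructor
  · refine fun hS => ⟨fun i => decide ((i, true) ∈ S), ?_⟩
    rintro ⟨i, b⟩ hi
    have := hS i
    cases b <;> simp_all
  · rintro ⟨σ, hσ⟩ i ⟨hfalse, htrue⟩
    exact Bool.false_ne_true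
      ((mem_transversal.mp (hσ hfalse)).trans (mem_transversal.mp (hσ htrue)).symm)

lemma mem_deltaMatroid_iff {B : Finset (Fin n × Bool)} :
    B ∈ deltaMatroid n Λ ↔ (∃ σ, transversal σ = B) ∧ rkF n Λ B = n := by
  constructor
  · rintro ⟨hadm, hcard, hrk⟩
    obtain ⟨σ, hσ⟩ := admissible_iff_exists_subset_transversal.mp hadm
    refine ⟨⟨σ, (Finset.eq_of_subset_of_card_le hσ ?_).symm⟩, hrk⟩
    rw [card_transversal, Fintype.card_fin, hcard]
  · rintro ⟨⟨σ, rfl⟩, hrk⟩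
    refine ⟨admissible_iff_exists_subset_transversal.mpr ⟨σ, subset_rfl⟩, ?_, hrk⟩
    rw [card_transversal, Fintype.card_fin]

lemma barExtend_chi_transversal (σ : Fin n → Bool) (p : Fin n × Bool) :
    barExtend (chi n (transversal σ)) p = if p ∈ transversal σ then 1 else 0 := by
  obtain ⟨i, b⟩ := p
  cases b <;> cases h : σ i <;> simp [barExtend, chi, h]

lemma rkF_eq_finrank_image_coordFun (hΛ : Module.finrank ℂ Λ = n) (S : Finset (Fin n × Bool)) :
    rkF n Λ S =
      Set.finrank ℂ ((fun p => coordFun Λ (some p)) '' (S : Set (Fin n × Bool))) := by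
  have hcomap : (Submodule.span ℂ (coordFun Λ '' finIdx n S)).dualCoannihilator =
      (coordSub n (finIdx n S)).comap Λ.subtype :=
    Submodule.ext fun _ => mem_dualCoannihilator_span_coordFun
  have hdim := Subspace.finrank_add_finrank_dualCoannihilator_eq
    (Submodule.span ℂ (coordFun Λ '' finIdx n S))
  rw [hcomap, ← Submodule.finrank_map_subtype_eq, Submodule.map_comap_subtype, hΛ, finIdx,
    Set.image_image] at hdim
  exact Nat.sub_eq_of_eq_add hdim.symm

lemma mem_polytopeP_iff_sum_barExtend_le {x : Fin n → ℝ} :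
    x ∈ polytopeP n Λ ↔ ∀ S, Admissible n S → ∑ p ∈ S, barExtend x p ≤ (rkF n Λ S : ℝ) := by
  have hxval (S : Finset (Fin n × Bool)) :
      xval n x S = ∑ p ∈ S, barExtend x p - ((S.filter fun p => p.2 = true).card : ℝ) := by
    simp only [xval, Finset.card_filter, Finset.sum_filter, Nat.cast_sum,
      ← Finset.sum_sub_distrib]
    refine Finset.sum_congr rfl ?_
    rintro ⟨i, b⟩ -
    cases b <;> simp [barExtend]
  refine forall₂_congr fun S _ => ?_
  rw [hxval, gF, Int.cast_sub, Int.cast_natCast, Int.cast_natCast, sub_le_sub_iff_right]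

lemma convex_polytopeP : Convex ℝ (polytopeP n Λ) := by
  have hlin (S : Finset (Fin n × Bool)) : IsLinearMap ℝ fun x => xval n x S := by
    constructor
    · intro x z
      simp only [xval, Pi.add_apply, Finset.sum_add_distrib]
      ring
    · intro c x
      simp only [xval, Pi.smul_apply, ← Finset.smul_sum, smul_sub]
  simp only [polytopeP, Set.ofPred_forall]
  exact convex_iInter₂ fun S _ => convex_halfSpace_le (hlin S) _

theorem chi_mem_polytopeP (hΛ : Module.finrank ℂ Λ = n) {B : Finset (Fin n × Bool)}
    (hB : B ∈ deltaMatroid n Λ) : chi n B ∈ polytopeP n Λ := by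
  obtain ⟨⟨σ, rfl⟩, hrk⟩ := mem_deltaMatroid_iff.mp hB
  have hind : LinearIndepOn ℂ (fun p => coordFun Λ (some p)) (transversal σ : Set (Fin n × Bool)) :=
    linearIndepOn_iff_finrank_image_eq_card.mpr <| by
      rw [← rkF_eq_finrank_image_coordFun hΛ, hrk, card_transversal, Fintype.card_fin]
  refine mem_polytopeP_iff_sum_barExtend_le.mpr fun S _ => ?_
  calc ∑ p ∈ S, barExtend (chi n (transversal σ)) p
      = ((S ∩ transversal σ).card : ℝ) := by
        simp only [barExtend_chi_transversal, Finset.sum_boole, Finset.filter_mem_eq_inter]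
    _ ≤ rkF n Λ S := by
        rw [rkF_eq_finrank_image_coordFun hΛ, Nat.cast_le]
        exact card_inter_le_finrank_image hind S

lemma bform_eq_sum_bar (ε : Fin n → Bool) (v u : Idx n → ℂ) :
    bform n v u = 2 * v none * u none + ∑ i, (v (some (i, ε i)) * u (some (i, !ε i)) +
      v (some (i, !ε i)) * u (some (i, ε i))) := by
  rw [bform]
  congr 1
  refine Finset.sum_congr rfl fun i _ => ?_
  cases ε i
  · rfl
  · exact add_comm _ _

lemma bform_eq_of_forall_eq_zero {ε : Fin n → Bool} {v : Idx n → ℂ}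
    (hv : ∀ i, v (some (i, ε i)) = 0) (u : Idx n → ℂ) :
    bform n v u = 2 * v none * u none + ∑ i, v (some (i, !ε i)) * u (some (i, ε i)) := by
  simp only [bform_eq_sum_bar ε, hv, zero_mul, zero_add]

namespace IsIsotropic

variable {ε : Fin n → Bool} {v : Idx n → ℂ}

lemma apply_none_eq_zero (hiso : IsIsotropic n Λ) (hvΛ : v ∈ Λ)
    (hv : ∀ i, v (some (i, ε i)) = 0) : v none = 0 := by
  simpa [bform_eq_of_forall_eq_zero hv, hv] using hiso v hvΛ v hvΛ

lemma sum_smul_coordFun_eq_zero (hiso : IsIsotropic n Λ) (hvΛ : v ∈ Λ)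
    (hv : ∀ i, v (some (i, ε i)) = 0) :
    ∑ i, v (some (i, !ε i)) • coordFun Λ (some (i, ε i)) = 0 := by
  ext u
  simpa [bform_eq_of_forall_eq_zero hv, hiso.apply_none_eq_zero hvΛ hv] using hiso v hvΛ u u.2

theorem eq_zero_of_forall_mem_transversal (hiso : IsIsotropic n Λ) {I : Finset (Fin n)}
    (hI : LinearIndepOn ℂ (fun i => coordFun Λ (some (i, ε i))) (I : Set (Fin n)))
    (hspan : ∀ i, coordFun Λ (some (i, ε i)) ∈
      Submodule.span ℂ ((fun i => coordFun Λ (some (i, ε i))) '' (I : Set (Fin n))))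
    (hvΛ : v ∈ Λ) (hv : ∀ p ∈ transversal (I.piecewise ε fun i => !ε i), v (some p) = 0) :
    v = 0 := by
  have hvI : ∀ i ∈ I, v (some (i, ε i)) = 0 := fun i hi => hv _ (by simp [hi])
  have hvI' : ∀ i ∉ I, v (some (i, !ε i)) = 0 := fun i hi => hv _ (by simp [hi])
  have hvε : ∀ i, v (some (i, ε i)) = 0 := by
    intro i
    have hi := hspan i
    rw [← Set.image_image (coordFun Λ) fun i => some (i, ε i)] at hi
    have hvann : (⟨v, hvΛ⟩ : Λ) ∈ Submodule.dualCoannihilator _ :=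
      mem_dualCoannihilator_span_coordFun.mpr (Set.forall_mem_image.mpr hvI)
    exact (Submodule.mem_dualCoannihilator _).mp hvann _ hi
  have hrel : ∑ i ∈ I, v (some (i, !ε i)) • coordFun Λ (some (i, ε i)) = 0 := by
    rw [Finset.sum_subset I.subset_univ fun i _ hi => by rw [hvI' i hi, zero_smul]]
    exact hiso.sum_smul_coordFun_eq_zero hvΛ hvε
  have hvbar : ∀ i, v (some (i, !ε i)) = 0 := fun i =>
    if hi : i ∈ I then linearIndepOn_finset_iff.mp hI _ hrel i hi else hvI' i hi
  funext k
  rcases k with _ | ⟨i, b⟩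
  · exact hiso.apply_none_eq_zero hvΛ hvε
  · rcases Bool.eq_or_eq_not b (ε i) with rfl | rfl
    · exact hvε i
    · exact hvbar i

theorem transversal_mem_deltaMatroid (hiso : IsIsotropic n Λ) {I : Finset (Fin n)}
    (hI : LinearIndepOn ℂ (fun i => coordFun Λ (some (i, ε i))) (I : Set (Fin n)))
    (hspan : ∀ i, coordFun Λ (some (i, ε i)) ∈
      Submodule.span ℂ ((fun i => coordFun Λ (some (i, ε i))) '' (I : Set (Fin n)))) :
    transversal (I.piecewise ε fun i => !ε i) ∈ deltaMatroid n Λ := by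
  refine mem_deltaMatroid_iff.mpr ⟨⟨_, rfl⟩, ?_⟩
  have hbot : Λ ⊓ coordSub n (finIdx n (transversal (I.piecewise ε fun i => !ε i))) = ⊥ :=
    (Submodule.eq_bot_iff _).mpr fun v hv =>
      hiso.eq_zero_of_forall_mem_transversal hI hspan hv.1 fun p hp => hv.2 _ ⟨p, hp, rfl⟩
  rw [rkF, rk, hbot, finrank_bot, Nat.sub_zero]

end IsIsotropic

lemma sum_barExtend_le_finrank_of_mem_polytopeP (hΛ : Module.finrank ℂ Λ = n) {x : Fin n → ℝ}
    (hx : x ∈ polytopeP n Λ) (ε : Fin n → Bool) (T : Finset (Fin n)) :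
    ∑ i ∈ T, barExtend x (i, ε i) ≤
      (Set.finrank ℂ ((fun i => coordFun Λ (some (i, ε i))) '' (T : Set (Fin n))) : ℝ) := by
  have hadm : Admissible n (T.image fun i => (i, ε i)) :=
    admissible_iff_exists_subset_transversal.mpr ⟨ε, by simp [Finset.image_subset_iff]⟩
  have hle := mem_polytopeP_iff_sum_barExtend_le.mp hx _ hadm
  rwa [rkF_eq_finrank_image_coordFun hΛ, Finset.sum_image fun i _ j _ h => congrArg Prod.fst h,
    Finset.coe_image, Set.image_image] at hle

theorem exists_mem_deltaMatroid_dotProduct_le_chi (hiso : IsIsotropic n Λ)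
    (hΛ : Module.finrank ℂ Λ = n) {x : Fin n → ℝ} (hx : x ∈ polytopeP n Λ) (w : Fin n → ℝ) :
    ∃ B ∈ deltaMatroid n Λ, w ⬝ᵥ x ≤ w ⬝ᵥ chi n B := by
  let ε : Fin n → Bool := fun i => decide (w i < 0)
  obtain ⟨I, -, hI, hspan, hle⟩ := exists_basis_sum_mul_le_sum Finset.univ
    (fun i _ => abs_nonneg (w i))
    (fun T _ => sum_barExtend_le_finrank_of_mem_polytopeP hΛ hx ε T)
  refine ⟨_, hiso.transversal_mem_deltaMatroid hI fun i => ?_, ?_⟩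
  · rw [hspan]
    exact Submodule.subset_span ⟨i, by simp, rfl⟩
  have hchi : ∀ i, barExtend (chi n (transversal (I.piecewise ε fun i => !ε i))) (i, ε i) =
      if i ∈ I then 1 else 0 := by
    intro i
    by_cases hi : i ∈ I <;> simp [barExtend_chi_transversal, hi]
  rw [dotProduct_eq_sum_abs_mul_barExtend, dotProduct_eq_sum_abs_mul_barExtend]
  refine sub_le_sub_right (hle.trans_eq ?_) _
  simp only [hchi, ε, mul_ite, mul_one, mul_zero, Finset.sum_ite_mem, Finset.univ_inter]

end IsotropicSubspaces

theorem stmt6 (n : ℕ) (hn : 2 ≤ n)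
    (Λ : Submodule ℂ (Idx n → ℂ)) (hiso : IsIsotropic n Λ)
    (hΛ : Module.finrank ℂ ↥Λ = n) :
    convexHull ℝ (chi n '' deltaMatroid n Λ) = polytopeP n Λ := by
  refine Set.Subset.antisymm (convexHull_min ?_ convex_polytopeP) fun x hx => ?_
  · rintro _ ⟨B, hB, rfl⟩
    exact chi_mem_polytopeP hΛ hB
  · refine mem_convexHull_of_forall_exists_dotProduct_le ((Set.toFinite _).image _) fun w => ?_
    obtain ⟨B, hB, hle⟩ := exists_mem_deltaMatroid_dotProduct_le_chi hiso hΛ hx w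
    exact ⟨chi n B, ⟨B, hB, rfl⟩, hle⟩
end
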